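/- arXiv:2310.20600 — 2 statements merged into one kernel-verified Lean document; each statement's English description precedes it below -/
import Mathlib

section
/- Let G be the dihedral group of order 8 or the dihedral group of order 16, and let W be any irreducible 2-dimensional complex representation of G. Then every G-invariant trilinear form on W × W × W is zero. -/
/-- A representation is irreducible if the underlying space is nonzero and the only
subspaces stable under the group action are `⊥` and `⊤`. -/
def IsIrreducibleRep {k G V : Type*} [CommSemiring k] [Monoid G]
    [AddCommMonoid V] [Module k V] (ρ : Representation k G V) : Prop :=
  (∃ v : V, v ≠ 0) ∧
    ∀ p : Submodule k V, (∀ (g : G) (v : V), v ∈ p → ρ g v ∈ p) → p = ⊥ ∨ p = ⊤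

/-! Let `v` be an eigenvector of the rotation `r` with eigenvalue `a`, so that `a ^ m = 1`. Then
`s v` is an eigenvector with eigenvalue `a⁻¹`, and `v`, `s v` span `V` by irreducibility. By
invariance under `r`, a trilinear form vanishes on eigenvectors of `r` whose eigenvalues have
product different from `1`; here these products are `a ^ 3`, `a`, `a⁻¹` and `a⁻¹ ^ 3`. If one of
them equals `1` then `a ^ 3 = 1`, hence `a = 1` because `3 ∤ m`. In that case `v + s v` is
invariant, hence zero as `V` is not trivial; so `s v = -v ≠ v`, and invariance under `s` forces the
form to vanish. -/

theorem trilinear_eq_zero_of_span_eq_top {k V₁ V₂ V₃ : Type*} [CommSemiring k]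
    [AddCommMonoid V₁] [Module k V₁] [AddCommMonoid V₂] [Module k V₂] [AddCommMonoid V₃]
    [Module k V₃] {Λ : V₁ →ₗ[k] V₂ →ₗ[k] V₃ →ₗ[k] k} {S₁ : Set V₁} {S₂ : Set V₂} {S₃ : Set V₃}
    (h₁ : Submodule.span k S₁ = ⊤) (h₂ : Submodule.span k S₂ = ⊤) (h₃ : Submodule.span k S₃ = ⊤)
    (h : ∀ x ∈ S₁, ∀ y ∈ S₂, ∀ z ∈ S₃, Λ x y z = 0) : Λ = 0 :=
  LinearMap.ext_on h₁ fun x hx ↦ LinearMap.ext_on h₂ fun y hy ↦ LinearMap.ext_on h₃ fun z hz ↦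
    h x hx y hy z hz

theorem trilinear_apply_eq_zero_of_smul {k V₁ V₂ V₃ : Type*} [CommRing k] [NoZeroDivisors k]
    [AddCommMonoid V₁] [Module k V₁] [AddCommMonoid V₂] [Module k V₂] [AddCommMonoid V₃]
    [Module k V₃] {Λ : V₁ →ₗ[k] V₂ →ₗ[k] V₃ →ₗ[k] k} {a b c : k} {x : V₁} {y : V₂} {z : V₃}
    (h : Λ (a • x) (b • y) (c • z) = Λ x y z) (habc : a * b * c ≠ 1) : Λ x y z = 0 := by
  simp only [map_smul, LinearMap.smul_apply, smul_eq_mul] at h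
  have hmul : (a * b * c - 1) * Λ x y z = 0 := by linear_combination h
  exact (mul_eq_zero.1 hmul).resolve_left (sub_ne_zero.2 habc)

theorem mul_mul_ne_one_of_pow_three_ne_one {k : Type*} [Field k] {a b c d : k} (ha : a ^ 3 ≠ 1)
    (hb : b = a ∨ b = a⁻¹) (hc : c = a ∨ c = a⁻¹) (hd : d = a ∨ d = a⁻¹) : b * c * d ≠ 1 := by
  grind

theorem mem_invariants_of_closure_eq_top {k G V : Type*} [CommRing k] [Group G] [AddCommGroup V]
    [Module k V] {ρ : Representation k G V} {T : Set G} (hT : Submonoid.closure T = ⊤) {v : V}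
    (h : ∀ g ∈ T, ρ g v = v) : v ∈ ρ.invariants := fun g ↦ by
  induction g using Submonoid.induction_of_closure_eq_top_left hT with
  | one => simp
  | mul_left g hg g' ih => rw [map_mul, Module.End.mul_apply, ih, h g hg]

namespace IsIrreducibleRep

theorem span_eq_top {k G V : Type*} [CommSemiring k] [Monoid G] [AddCommMonoid V] [Module k V]
    {ρ : Representation k G V} (hirr : IsIrreducibleRep ρ) {T : Set G}
    (hT : Submonoid.closure T = ⊤) {S : Set V} {v : V} (hv : v ∈ S) (hv₀ : v ≠ 0)
    (h : ∀ g ∈ T, ∀ x ∈ S, ρ g x ∈ Submodule.span k S) : Submodule.span k S = ⊤ := by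
  have hstable (g : G) : ∀ x ∈ Submodule.span k S, ρ g x ∈ Submodule.span k S := by
    induction g using Submonoid.induction_of_closure_eq_top_left hT with
    | one => simp
    | mul_left g hg g' ih =>
      have hle : Submodule.span k S ≤ (Submodule.span k S).comap (ρ g) :=
        Submodule.span_le.2 (h g hg)
      exact fun x hx ↦ by simpa using hle (ih x hx)
  refine (hirr.2 _ hstable).resolve_left fun hbot ↦ hv₀ ?_
  exact Submodule.span_eq_bot.1 hbot v hv

theorem module_finite {k G V : Type*} [CommSemiring k] [Monoid G] [Finite G] [AddCommMonoid V]
    [Module k V] {ρ : Representation k G V} (hirr : IsIrreducibleRep ρ) : Module.Finite k V := by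
  obtain ⟨v, hv₀⟩ := hirr.1
  have horbit : Submodule.span k (Set.range fun g ↦ ρ g v) = ⊤ := by
    refine hirr.span_eq_top Submonoid.closure_univ (v := v) ⟨1, by simp⟩ hv₀ ?_
    rintro g - _ ⟨g', rfl⟩
    exact Submodule.subset_span ⟨g * g', by simp⟩
  exact ⟨Submodule.fg_def.2 ⟨_, Set.finite_range _, horbit⟩⟩

theorem invariants_eq_bot {k G V : Type*} [CommRing k] [Group G] [AddCommGroup V] [Module k V]
    {ρ : Representation k G V} (hirr : IsIrreducibleRep ρ) (hρ : ¬ρ.IsTrivial) :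
    ρ.invariants = ⊥ := by
  refine (hirr.2 ρ.invariants fun g v hv ↦ (hv g).symm ▸ hv).resolve_right fun htop ↦ hρ ⟨?_⟩
  exact fun g ↦ LinearMap.ext fun v ↦ (htop ▸ Submodule.mem_top : v ∈ ρ.invariants) g

theorem finrank_eq_one_of_isTrivial {k G V : Type*} [Field k] [Monoid G] [AddCommGroup V]
    [Module k V] {ρ : Representation k G V} (hirr : IsIrreducibleRep ρ) [ρ.IsTrivial] :
    Module.finrank k V = 1 := by
  obtain ⟨v, hv₀⟩ := hirr.1
  have hspan : Submodule.span k {v} = ⊤ :=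
    hirr.span_eq_top Submonoid.closure_univ rfl hv₀ fun g _ x hx ↦ by
      simpa using Submodule.subset_span hx
  rw [← finrank_top, ← hspan, finrank_span_singleton hv₀]

end IsIrreducibleRep

section Dihedral

open DihedralGroup

theorem closure_r_one_sr_zero (m : ℕ) :
    Submonoid.closure {r 1, sr 0} = (⊤ : Submonoid (DihedralGroup m)) := by
  have hr : (r 1 : DihedralGroup m) ∈ Submonoid.closure {r 1, sr 0} :=
    Submonoid.subset_closure (by simp)
  have hs : (sr 0 : DihedralGroup m) ∈ Submonoid.closure {r 1, sr 0} :=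
    Submonoid.subset_closure (by simp)
  have hpow (n : ℕ) : (r n : DihedralGroup m) ∈ Submonoid.closure {r 1, sr 0} := by
    simpa using pow_mem hr n
  have hrot (i : ZMod m) : r i ∈ Submonoid.closure {r 1, sr 0} := by
    obtain ⟨j, rfl⟩ := ZMod.intCast_surjective i
    obtain ⟨n, rfl | rfl⟩ := j.eq_nat_or_neg
    · simpa using hpow n
    · simpa using mul_mem (mul_mem hs (hpow n)) hs
  refine eq_top_iff.2 ?_
  rintro (i | i) -
  · exact hrot i
  · simpa using mul_mem hs (hrot i)

theorem mem_invariants_of_apply_r_one_of_apply_sr_zero {k V : Type*} [CommRing k] [AddCommGroup V]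
    [Module k V] {m : ℕ} {ρ : Representation k (DihedralGroup m) V} {v : V}
    (hr : ρ (r 1) v = v) (hs : ρ (sr 0) v = v) : v ∈ ρ.invariants :=
  mem_invariants_of_closure_eq_top (closure_r_one_sr_zero m) (by simp [hr, hs])

theorem apply_sr_apply_sr {k V : Type*} [CommSemiring k] [AddCommMonoid V] [Module k V] {m : ℕ}
    (ρ : Representation k (DihedralGroup m) V) (i : ZMod m) (v : V) :
    ρ (sr i) (ρ (sr i) v) = v := by
  rw [← Module.End.mul_apply, ← map_mul, sr_mul_self, map_one, Module.End.one_apply]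

section Eigenvector

variable {k V : Type*} [Field k] [AddCommGroup V] [Module k V] {m : ℕ}
  {ρ : Representation k (DihedralGroup m) V} {a : k} {v : V}

theorem apply_r_one_apply_sr_zero (hv : ρ (r 1) v = a • v) :
    ρ (r 1) (ρ (sr 0) v) = a⁻¹ • ρ (sr 0) v := by
  have hsmul : a • ρ (r 1) (ρ (sr 0) v) = ρ (sr 0) v := by
    rw [← map_smul, ← map_smul, ← hv]
    simp only [← Module.End.mul_apply, ← map_mul, sr_mul_r, r_mul_sr, zero_add, sub_self]
  rcases eq_or_ne a 0 with rfl | ha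
  · rw [← hsmul]
    simp
  · exact (eq_inv_smul_iff₀ ha).2 hsmul

theorem span_pair_eq_top_of_apply_r_one_eq_smul (hirr : IsIrreducibleRep ρ) (hv₀ : v ≠ 0)
    (hv : ρ (r 1) v = a • v) : Submodule.span k {v, ρ (sr 0) v} = ⊤ := by
  have hmem : v ∈ Submodule.span k {v, ρ (sr 0) v} := Submodule.subset_span (by simp)
  have hmem_sr : ρ (sr 0) v ∈ Submodule.span k {v, ρ (sr 0) v} := Submodule.subset_span (by simp)
  refine hirr.span_eq_top (closure_r_one_sr_zero m) (Set.mem_insert v _) hv₀ ?_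
  rintro g (rfl | rfl) x (rfl | rfl)
  · exact hv ▸ Submodule.smul_mem _ a hmem
  · exact apply_r_one_apply_sr_zero hv ▸ Submodule.smul_mem _ a⁻¹ hmem_sr
  · exact hmem_sr
  · exact (apply_sr_apply_sr ρ 0 v).symm ▸ hmem

theorem pow_eq_one_of_hasEigenvector_r_one
    (hv : Module.End.HasEigenvector (ρ (r 1)) a v) : a ^ m = 1 := by
  have hpow : a ^ m • v = (1 : k) • v := by
    rw [← hv.pow_apply, ← map_pow, r_one_pow_n, map_one, Module.End.one_apply, one_smul]
  exact smul_left_injective k hv.2 hpow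

variable {Λ : V →ₗ[k] V →ₗ[k] V →ₗ[k] k}

theorem trilinear_eq_zero_of_pow_three_ne_one (hirr : IsIrreducibleRep ρ)
    (hΛ : ∀ x y z, Λ (ρ (r 1) x) (ρ (r 1) y) (ρ (r 1) z) = Λ x y z)
    (hv₀ : v ≠ 0) (hv : ρ (r 1) v = a • v) (ha : a ^ 3 ≠ 1) : Λ = 0 := by
  have hspan := span_pair_eq_top_of_apply_r_one_eq_smul hirr hv₀ hv
  have heigen : ∀ x ∈ ({v, ρ (sr 0) v} : Set V), ∃ b, (b = a ∨ b = a⁻¹) ∧ ρ (r 1) x = b • x := by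
    rintro x (rfl | rfl)
    · exact ⟨a, .inl rfl, hv⟩
    · exact ⟨a⁻¹, .inr rfl, apply_r_one_apply_sr_zero hv⟩
  refine trilinear_eq_zero_of_span_eq_top hspan hspan hspan fun x hx y hy z hz ↦ ?_
  obtain ⟨b, hb, hxb⟩ := heigen x hx
  obtain ⟨c, hc, hyc⟩ := heigen y hy
  obtain ⟨d, hd, hzd⟩ := heigen z hz
  refine trilinear_apply_eq_zero_of_smul ?_ (mul_mul_ne_one_of_pow_three_ne_one ha hb hc hd)
  rw [← hxb, ← hyc, ← hzd, hΛ]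

theorem apply_sr_zero_eq_neg_of_apply_r_one_eq_self (hirr : IsIrreducibleRep ρ) (hρ : ¬ρ.IsTrivial)
    (hv : ρ (r 1) v = v) : ρ (sr 0) v = -v := by
  have hsv : ρ (r 1) (ρ (sr 0) v) = ρ (sr 0) v := by
    simpa using apply_r_one_apply_sr_zero (hv.trans (one_smul k v).symm)
  have hinv : v + ρ (sr 0) v ∈ ρ.invariants :=
    mem_invariants_of_apply_r_one_of_apply_sr_zero (by rw [map_add, hv, hsv])
      (by rw [map_add, apply_sr_apply_sr, add_comm])
  rw [hirr.invariants_eq_bot hρ, Submodule.mem_bot] at hinv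
  exact eq_neg_of_add_eq_zero_right hinv

theorem trilinear_eq_zero_of_apply_r_one_eq_self (hirr : IsIrreducibleRep ρ) (hρ : ¬ρ.IsTrivial)
    (hΛ : ∀ x y z, Λ (ρ (sr 0) x) (ρ (sr 0) y) (ρ (sr 0) z) = Λ x y z)
    (hv₀ : v ≠ 0) (hv : ρ (r 1) v = v) : Λ = 0 := by
  have hsv : ρ (sr 0) v = (-1 : k) • v := by
    simpa using apply_sr_zero_eq_neg_of_apply_r_one_eq_self hirr hρ hv
  have hne : (-1 : k) ≠ 1 := fun h ↦ hv₀ <| by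
    rw [← Submodule.mem_bot k, ← hirr.invariants_eq_bot hρ]
    exact mem_invariants_of_apply_r_one_of_apply_sr_zero hv (by rw [hsv, h, one_smul])
  have hspan : Submodule.span k {v} = ⊤ := by
    refine hirr.span_eq_top (closure_r_one_sr_zero m) (Set.mem_singleton v) hv₀ ?_
    rintro g (rfl | rfl) x rfl
    · exact hv.symm ▸ Submodule.mem_span_singleton_self x
    · exact hsv ▸ Submodule.smul_mem _ _ (Submodule.mem_span_singleton_self x)
  refine trilinear_eq_zero_of_span_eq_top hspan hspan hspan ?_
  rintro x rfl y rfl z rfl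
  refine trilinear_apply_eq_zero_of_smul ?_ (by simpa using hne : (-1 : k) * -1 * -1 ≠ 1)
  rw [← hsv, hΛ]

end Eigenvector

end Dihedral

theorem stmt3_general {k : Type*} [Field k] [IsAlgClosed k] {m : ℕ} (hm : ¬3 ∣ m)
    {V : Type*} [AddCommGroup V] [Module k V]
    (ρ : Representation k (DihedralGroup m) V) (hirr : IsIrreducibleRep ρ) (hρ : ¬ρ.IsTrivial)
    (Λ : V →ₗ[k] V →ₗ[k] V →ₗ[k] k)
    (hΛ : ∀ (g : DihedralGroup m) (v₁ v₂ v₃ : V),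
      Λ (ρ g v₁) (ρ g v₂) (ρ g v₃) = Λ v₁ v₂ v₃) :
    Λ = 0 := by
  have : NeZero m := ⟨fun h ↦ hm (h ▸ dvd_zero 3)⟩
  have : FiniteDimensional k V := hirr.module_finite
  have : Nontrivial V := let ⟨v, hv₀⟩ := hirr.1; nontrivial_of_ne v 0 hv₀
  obtain ⟨a, ha⟩ := Module.End.exists_eigenvalue (ρ (.r 1))
  obtain ⟨v, hv⟩ := ha.exists_hasEigenvector
  by_cases ha₃ : a ^ 3 = 1
  · have hcop : Nat.Coprime 3 m := (Nat.Prime.coprime_iff_not_dvd Nat.prime_three).2 hm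
    obtain rfl : a = 1 :=
      (pow_eq_one_iff_of_coprime hcop).1 ⟨ha₃, pow_eq_one_of_hasEigenvector_r_one hv⟩
    have hfix : ρ (.r 1) v = v := hv.apply_eq_smul.trans (one_smul k v)
    exact trilinear_eq_zero_of_apply_r_one_eq_self hirr hρ (hΛ _) hv.2 hfix
  · exact trilinear_eq_zero_of_pow_three_ne_one hirr (hΛ _) hv.2 hv.apply_eq_smul ha₃

/-- Let `G` be the dihedral group of order `8` or `16`
(`DihedralGroup m` with `m = 4` or `m = 8`) and `W` an irreducible `2`-dimensional
complex representation of `G`.  Then every `G`-invariant trilinear form on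
`W × W × W` is zero. -/
theorem stmt3 (m : ℕ) (hm : m = 4 ∨ m = 8)
    {V : Type*} [AddCommGroup V] [Module ℂ V]
    (ρ : Representation ℂ (DihedralGroup m) V)
    (hirr : IsIrreducibleRep ρ) (hdim : Module.finrank ℂ V = 2)
    (Λ : V →ₗ[ℂ] V →ₗ[ℂ] V →ₗ[ℂ] ℂ)
    (hΛ : ∀ (g : DihedralGroup m) (v₁ v₂ v₃ : V),
      Λ (ρ g v₁) (ρ g v₂) (ρ g v₃) = Λ v₁ v₂ v₃) :
    Λ = 0 := by
  refine stmt3_general (by omega) ρ hirr (fun _ ↦ ?_) Λ hΛ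
  exact absurd hirr.finrank_eq_one_of_isTrivial (by omega)
end

section
/- Let G be the symmetric group S₄ on four letters and let W₁, W₂, W₃ be irreducible complex representations of G, each of dimension 2 or 3. If the dimension triple (dim W₁, dim W₂, dim W₃) is not equal to (2, 2, 3) up to permutation, then there exists a nonzero G-invariant trilinear form on W₁ × W₂ × W₃. -/
/-!
For a subgroup `H` of `S₄`, averaging over `H` shows that `∑ h ∈ H, χ h` is `|H|` times the
dimension of the space of `H`-fixed vectors, a natural number. Applied to `S₄`, to a point
stabilizer `S₃`, and to the dihedral subgroup of order `8`, for a representation and for its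
twist by the sign, this determines the characters of the irreducible representations of
dimension `2` and `3`. The character of the representation on trilinear forms is the product of
the three characters, and outside the dimensions `(2, 2, 3)` its average over `S₄` is `1`: the
invariant trilinear form exists and is unique up to a scalar.
-/

open Equiv Finset Module MulAction
open scoped Pointwise

-- Lets instance search find the additive group structure on `V₁ →ₗ[k] V₂ →ₗ[k] V₃ →ₗ[k] k`.
set_option maxSynthPendingDepth 3

theorem sum_comp_eq_sum_card_nsmul {G H A ι : Type*} [Group G] [Fintype H] [Fintype ι]
    [AddCommMonoid A] [DecidableRel (IsConj : G → G → Prop)] {r : ι → G}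
    (hr : ∀ g, ∃! i, IsConj (r i) g) {f : G → A} (hf : ∀ g h, IsConj g h → f g = f h)
    (φ : H → G) : ∑ h, f (φ h) = ∑ i, #{h | IsConj (r i) (φ h)} • f (r i) := by
  have hsplit (g : G) : f g = ∑ i, if IsConj (r i) g then f (r i) else 0 := by
    obtain ⟨i, hi, huniq⟩ := hr g
    rw [Fintype.sum_eq_single i fun j hj ↦ if_neg (mt (huniq j) hj), if_pos hi, hf _ _ hi]
  calc ∑ h, f (φ h) = ∑ h, ∑ i, if IsConj (r i) (φ h) then f (r i) else 0 :=
        sum_congr rfl fun h _ ↦ hsplit (φ h)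
    _ = ∑ i, #{h | IsConj (r i) (φ h)} • f (r i) := by
        rw [sum_comm]
        exact sum_congr rfl fun i _ ↦ by rw [← sum_filter, sum_const]

section Irreducible

variable {k G V : Type*}

theorem IsIrreducibleRep.invariants_eq_bot_s4 [Field k] [Group G] [AddCommGroup V] [Module k V]
    {ρ : Representation k G V} (hρ : IsIrreducibleRep ρ) (hV : finrank k V ≠ 1) :
    ρ.invariants = ⊥ := by
  obtain ⟨⟨v, hv⟩, hsub⟩ := hρ
  refine (hsub ρ.invariants fun g w hw ↦ (hw g).symm ▸ hw).resolve_right fun htop ↦ ?_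
  have hfix (g : G) (w : V) : ρ g w = w := (htop ▸ Submodule.mem_top : w ∈ ρ.invariants) g
  rcases hsub (k ∙ v) fun g w hw ↦ (hfix g w).symm ▸ hw with hbot | hspan
  · exact hv (Submodule.span_singleton_eq_bot.mp hbot)
  · exact hV (by rw [← finrank_top k V, ← hspan, finrank_span_singleton hv])

/-- The twist `χ ⊗ ρ` of a representation by a linear character, acting on the space of `ρ`. -/
def twist [CommSemiring k] [Monoid G] [AddCommMonoid V] [Module k V] (χ : G →* kˣ)
    (ρ : Representation k G V) : Representation k G V where
  toFun g := (χ g : k) • ρ g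
  map_one' := by simp
  map_mul' g h := by simp only [map_mul, Units.val_mul, smul_mul_smul_comm]

theorem IsIrreducibleRep.twist [CommSemiring k] [Monoid G] [AddCommMonoid V] [Module k V]
    {ρ : Representation k G V} (hρ : IsIrreducibleRep ρ) (χ : G →* kˣ) :
    IsIrreducibleRep (twist χ ρ) :=
  ⟨hρ.1, fun p hp ↦ hρ.2 p fun g v hv ↦
    (p.smul_mem_iff_of_isUnit (χ g).isUnit).mp (hp g v hv)⟩

theorem character_twist [Field k] [Monoid G] [AddCommGroup V] [Module k V] (χ : G →* kˣ)
    (ρ : Representation k G V) (g : G) :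
    (twist χ ρ).character g = χ g * ρ.character g := by
  simp [twist, Representation.character]

end Irreducible

section Character

variable {k G V V₁ V₂ V₃ : Type*} [Field k] [Group G]
  [AddCommGroup V] [Module k V]
  [AddCommGroup V₁] [Module k V₁] [AddCommGroup V₂] [Module k V₂] [AddCommGroup V₃] [Module k V₃]

theorem character_eq_of_isConj (ρ : Representation k G V) {g h : G} (hgh : IsConj g h) :
    ρ.character g = ρ.character h := by
  obtain ⟨c, rfl⟩ := isConj_iff.mp hgh
  exact (ρ.char_conj g c).symm

theorem card_mul_finrank_invariants [Fintype G] [CharZero k] [FiniteDimensional k V]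
    (ρ : Representation k G V) :
    (Nat.card G : k) * finrank k ρ.invariants = ∑ g, ρ.character g := by
  have hG : (Nat.card G : k) ≠ 0 := Nat.cast_ne_zero.mpr Nat.card_pos.ne'
  let _ : Invertible (Nat.card G : k) := invertibleOfNonzero hG
  rw [← ρ.card_inv_mul_sum_char_eq_finrank, mul_inv_cancel_left₀ hG]

theorem card_mul_finrank_invariants_comp {H ι : Type*} [Group H] [Fintype H] [Fintype ι]
    [CharZero k] [FiniteDimensional k V] [DecidableRel (IsConj : G → G → Prop)] {r : ι → G}
    (hr : ∀ g, ∃! i, IsConj (r i) g)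
    (ρ : Representation k G V) (φ : H →* G) :
    (Nat.card H : k) * finrank k (Representation.invariants (ρ.comp φ)) =
      ∑ i, (#{h | IsConj (r i) (φ h)} : k) * ρ.character (r i) := by
  simp_rw [card_mul_finrank_invariants, ← nsmul_eq_mul]
  exact sum_comp_eq_sum_card_nsmul hr (fun _ _ ↦ character_eq_of_isConj ρ) φ

/-- The representation of `G` on trilinear forms by `Λ ↦ Λ (g⁻¹ ·) (g⁻¹ ·) (g⁻¹ ·)`;
its invariants are the `G`-invariant trilinear forms. -/
def trilinearRep (ρ₁ : Representation k G V₁) (ρ₂ : Representation k G V₂)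
    (ρ₃ : Representation k G V₃) : Representation k G (V₁ →ₗ[k] V₂ →ₗ[k] V₃ →ₗ[k] k) :=
  ρ₁.linHom (ρ₂.linHom ρ₃.dual)

variable (ρ₁ : Representation k G V₁) (ρ₂ : Representation k G V₂) (ρ₃ : Representation k G V₃)

theorem apply_eq_of_mem_invariants_trilinearRep {Λ : V₁ →ₗ[k] V₂ →ₗ[k] V₃ →ₗ[k] k}
    (hΛ : Λ ∈ (trilinearRep ρ₁ ρ₂ ρ₃).invariants) (g : G) (v₁ : V₁) (v₂ : V₂) (v₃ : V₃) :
    Λ (ρ₁ g v₁) (ρ₂ g v₂) (ρ₃ g v₃) = Λ v₁ v₂ v₃ := by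
  conv_lhs => rw [← hΛ g]
  simp [trilinearRep, Representation.dual_apply, Dual.transpose_apply]

variable [FiniteDimensional k V₁] [FiniteDimensional k V₂] [FiniteDimensional k V₃]

theorem character_trilinearRep (g : G) : (trilinearRep ρ₁ ρ₂ ρ₃).character g =
    ρ₁.character g⁻¹ * ρ₂.character g⁻¹ * ρ₃.character g⁻¹ := by
  rw [trilinearRep, Representation.char_linHom, Representation.char_linHom,
    Representation.char_dual, mul_assoc]

end Character

section S₄

/-- Representatives of the conjugacy classes of `S₄`, indexing the columns of its character table:
identity, transpositions, double transpositions, `3`-cycles, `4`-cycles. -/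
def classRep : Fin 5 → Perm (Fin 4) :=
  ![1, swap 0 1, swap 0 1 * swap 2 3, swap 0 1 * swap 1 2, swap 0 1 * swap 1 2 * swap 2 3]

/-- The sign of a permutation as a linear character with values in `k`. -/
def signChar (k α : Type*) [CommRing k] [Fintype α] [DecidableEq α] : Perm α →* kˣ :=
  (Units.map (Int.castRingHom k).toMonoidHom).comp Perm.sign

theorem coe_signChar (k : Type*) {α : Type*} [CommRing k] [Fintype α] [DecidableEq α]
    (g : Perm α) : (signChar k α g : k) = ((Perm.sign g : ℤˣ) : ℤ) :=
  rfl

theorem existsUnique_isConj_classRep : ∀ g, ∃! i, IsConj (classRep i) g := by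
  unfold ExistsUnique
  decide +kernel

theorem isConj_inv_classRep : ∀ i, IsConj (classRep i)⁻¹ (classRep i) := by decide +kernel

theorem sign_classRep : ∀ i, Perm.sign (classRep i) = ![1, -1, 1, 1, -1] i := by decide +kernel

theorem card_isConj_classRep : ∀ i, #{g | IsConj (classRep i) g} = ![1, 6, 3, 8, 6] i := by
  decide +kernel

/-- The copy of `S₃` in `S₄` that fixes the last letter. -/
abbrev pointStabilizer : Subgroup (Perm (Fin 4)) :=
  stabilizer (Perm (Fin 4)) (3 : Fin 4)

/-- The dihedral subgroup of order `8` in `S₄`, as the stabilizer of the partition `01|23`. -/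
abbrev pairingStabilizer : Subgroup (Perm (Fin 4)) :=
  stabilizer (Perm (Fin 4)) ({{0, 1}, {2, 3}} : Finset (Finset (Fin 4)))

theorem card_perm_fin_four : Nat.card (Perm (Fin 4)) = 24 := by
  rw [Nat.card_perm, Nat.card_fin]
  rfl

theorem card_pointStabilizer : Nat.card pointStabilizer = 6 := by
  rw [Nat.card_eq_fintype_card]
  decide +kernel

theorem card_pairingStabilizer : Nat.card pairingStabilizer = 8 := by
  rw [Nat.card_eq_fintype_card]
  decide +kernel

theorem card_isConj_classRep_pointStabilizer :
    ∀ i, #{g | IsConj (classRep i) (pointStabilizer.subtype g)} = ![1, 3, 0, 2, 0] i := by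
  decide +kernel

theorem card_isConj_classRep_pairingStabilizer :
    ∀ i, #{g | IsConj (classRep i) (pairingStabilizer.subtype g)} = ![1, 2, 3, 0, 2] i := by
  decide +kernel

variable {k V : Type*} [Field k] [CharZero k] [AddCommGroup V] [Module k V]
  [FiniteDimensional k V] (ρ : Representation k (Perm (Fin 4)) V)

theorem twentyFour_mul_finrank_invariants :
    24 * (finrank k ρ.invariants : k) = ρ.character (classRep 0) + 6 * ρ.character (classRep 1) +
      3 * ρ.character (classRep 2) + 8 * ρ.character (classRep 3) +
      6 * ρ.character (classRep 4) := by
  have h : (Nat.card (Perm (Fin 4)) : k) * finrank k ρ.invariants =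
      ∑ i, (#{g | IsConj (classRep i) g} : k) * ρ.character (classRep i) :=
    card_mul_finrank_invariants_comp existsUnique_isConj_classRep ρ (MonoidHom.id _)
  simpa only [card_perm_fin_four, card_isConj_classRep, Fin.sum_univ_five, Matrix.cons_val,
    Nat.cast_ofNat, Nat.cast_one, one_mul] using h

theorem six_mul_finrank_invariants_pointStabilizer :
    6 * (finrank k (Representation.invariants (ρ.comp pointStabilizer.subtype)) : k) =
      ρ.character (classRep 0) + 3 * ρ.character (classRep 1) + 2 * ρ.character (classRep 3) := by
  have h := card_mul_finrank_invariants_comp existsUnique_isConj_classRep ρ pointStabilizer.subtype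
  simpa only [card_pointStabilizer, card_isConj_classRep_pointStabilizer, Fin.sum_univ_five,
    Matrix.cons_val, Nat.cast_ofNat, Nat.cast_one, Nat.cast_zero, one_mul, zero_mul, add_zero]
    using h

theorem eight_mul_finrank_invariants_pairingStabilizer :
    8 * (finrank k (Representation.invariants (ρ.comp pairingStabilizer.subtype)) : k) =
      ρ.character (classRep 0) + 2 * ρ.character (classRep 1) + 3 * ρ.character (classRep 2) +
        2 * ρ.character (classRep 4) := by
  have h :=
    card_mul_finrank_invariants_comp existsUnique_isConj_classRep ρ pairingStabilizer.subtype
  simpa only [card_pairingStabilizer, card_isConj_classRep_pairingStabilizer, Fin.sum_univ_five,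
    Matrix.cons_val, Nat.cast_ofNat, Nat.cast_one, Nat.cast_zero, one_mul, zero_mul, add_zero]
    using h

-- By Frobenius reciprocity `a`, `b` and `c` are the multiplicities of the standard representation,
-- of its sign twist and of the two-dimensional representation.
theorem exists_character_classRep_eq (htriv : ρ.invariants = ⊥)
    (hsign : (twist (signChar k (Fin 4)) ρ).invariants = ⊥) :
    ∃ a b c : ℕ, ∀ i, ρ.character (classRep i) =
      (![3 * (a + b) + 2 * c, a - b, 2 * c - (a + b), -c, b - a] : Fin 5 → k) i := by
  obtain ⟨a, ha⟩ : ∃ a : ℕ, 6 * (a : k) = _ := ⟨_, six_mul_finrank_invariants_pointStabilizer ρ⟩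
  obtain ⟨b, hb⟩ : ∃ b : ℕ, 6 * (b : k) = _ :=
    ⟨_, six_mul_finrank_invariants_pointStabilizer (twist (signChar k (Fin 4)) ρ)⟩
  obtain ⟨c, hc⟩ : ∃ c : ℕ, 8 * (c : k) = _ := ⟨_, eight_mul_finrank_invariants_pairingStabilizer ρ⟩
  have h₁ := twentyFour_mul_finrank_invariants ρ
  have h₂ := twentyFour_mul_finrank_invariants (twist (signChar k (Fin 4)) ρ)
  rw [htriv, finrank_bot] at h₁
  rw [hsign, finrank_bot] at h₂
  simp only [character_twist, coe_signChar, sign_classRep, Matrix.cons_val] at h₂ hb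
  push_cast at h₁ h₂ hb
  have heven : ρ.character (classRep 0) + 3 * ρ.character (classRep 2) +
      8 * ρ.character (classRep 3) = 0 := by
    linear_combination (-1/2 : k) * (h₁ + h₂)
  have hodd : ρ.character (classRep 1) + ρ.character (classRep 4) = 0 := by
    linear_combination (-1/12 : k) * (h₁ - h₂)
  refine ⟨a, b, c, fun i ↦ ?_⟩
  fin_cases i <;> simp only [Fin.zero_eta, Fin.mk_one, Fin.reduceFinMk, Matrix.cons_val]
  · linear_combination (-1/2 : k) * (ha + hb) - (1/4 : k) * (hc + heven) - (1/2 : k) * hodd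
  · linear_combination (-1/6 : k) * (ha - hb)
  · linear_combination (1/6 : k) * (ha + hb) - (1/4 : k) * hc + (1/12 : k) * heven
      - (1/2 : k) * hodd
  · linear_combination (1/8 : k) * (hc + heven) + (1/4 : k) * hodd
  · linear_combination (1/6 : k) * (ha - hb) + hodd

theorem IsIrreducibleRep.character_classRep {ρ : Representation k (Perm (Fin 4)) V}
    (hρ : IsIrreducibleRep ρ) (hV : finrank k V = 2 ∨ finrank k V = 3) :
    (finrank k V = 2 ∧
      ∀ i, ρ.character (classRep i) = (![2, 0, 2, -1, 0] : Fin 5 → k) i) ∨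
    (finrank k V = 3 ∧ ∃ ε : ℤˣ,
      ∀ i, ρ.character (classRep i) = (![3, (ε : ℤ), -1, 0, -(ε : ℤ)] : Fin 5 → k) i) := by
  have hV₁ : finrank k V ≠ 1 := by lia
  obtain ⟨a, b, c, hχ⟩ := exists_character_classRep_eq ρ (hρ.invariants_eq_bot_s4 hV₁)
    ((hρ.twist _).invariants_eq_bot_s4 hV₁)
  have hdim : finrank k V = 3 * (a + b) + 2 * c := by
    have h₀ : (finrank k V : k) = 3 * (a + b) + 2 * c := ρ.char_one.symm.trans (hχ 0)
    exact_mod_cast h₀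
  refine hV.imp (fun h ↦ ⟨h, ?_⟩) (fun h ↦ ⟨h, ?_⟩)
  · obtain ⟨rfl, rfl, rfl⟩ : a = 0 ∧ b = 0 ∧ c = 1 := by lia
    simpa using hχ
  · obtain ⟨rfl, rfl, rfl⟩ | ⟨rfl, rfl, rfl⟩ : (a = 1 ∧ b = 0 ∧ c = 0) ∨
        (a = 0 ∧ b = 1 ∧ c = 0) := by lia
    · exact ⟨1, by simpa using hχ⟩
    · exact ⟨-1, by simpa using hχ⟩

end S₄

section Trilinear

variable {k V₁ V₂ V₃ : Type*} [Field k] [AddCommGroup V₁] [Module k V₁]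
  [AddCommGroup V₂] [Module k V₂] [AddCommGroup V₃] [Module k V₃]
  {ρ₁ : Representation k (Perm (Fin 4)) V₁} {ρ₂ : Representation k (Perm (Fin 4)) V₂}
  {ρ₃ : Representation k (Perm (Fin 4)) V₃}

theorem character_trilinearRep_classRep
    [FiniteDimensional k V₁] [FiniteDimensional k V₂] [FiniteDimensional k V₃] (i : Fin 5) :
    (trilinearRep ρ₁ ρ₂ ρ₃).character (classRep i) =
      ρ₁.character (classRep i) * ρ₂.character (classRep i) * ρ₃.character (classRep i) := by
  simp only [character_trilinearRep, character_eq_of_isConj _ (isConj_inv_classRep i)]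

theorem finrank_invariants_trilinearRep_eq_one [CharZero k]
    (h₁ : IsIrreducibleRep ρ₁) (h₂ : IsIrreducibleRep ρ₂) (h₃ : IsIrreducibleRep ρ₃)
    (d₁ : finrank k V₁ = 2 ∨ finrank k V₁ = 3) (d₂ : finrank k V₂ = 2 ∨ finrank k V₂ = 3)
    (d₃ : finrank k V₃ = 2 ∨ finrank k V₃ = 3)
    (hne : ({finrank k V₁, finrank k V₂, finrank k V₃} : Multiset ℕ) ≠ {2, 2, 3}) :
    finrank k (trilinearRep ρ₁ ρ₂ ρ₃).invariants = 1 := by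
  have : FiniteDimensional k V₁ := finite_of_finrank_pos (by lia)
  have : FiniteDimensional k V₂ := finite_of_finrank_pos (by lia)
  have : FiniteDimensional k V₃ := finite_of_finrank_pos (by lia)
  suffices h : 24 * (finrank k (trilinearRep ρ₁ ρ₂ ρ₃).invariants : k) = 24 by
    exact_mod_cast mul_left_cancel₀ (by norm_num) (h.trans (mul_one 24).symm)
  simp only [twentyFour_mul_finrank_invariants, character_trilinearRep_classRep]
  -- The class sums are `8 + 3 * 8 - 8`, `18 + 3 * 2` and `27 + 6 * ε - 3 - 6 * ε` in dimensions
  -- `(2, 2, 2)`, `(2, 3, 3)` and `(3, 3, 3)`, where `ε = ε₁ * ε₂ * ε₃`.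
  rcases h₁.character_classRep d₁ with ⟨e₁, χ₁⟩ | ⟨e₁, ε₁, χ₁⟩ <;>
  rcases h₂.character_classRep d₂ with ⟨e₂, χ₂⟩ | ⟨e₂, ε₂, χ₂⟩ <;>
  rcases h₃.character_classRep d₃ with ⟨e₃, χ₃⟩ | ⟨e₃, ε₃, χ₃⟩ <;>
  rw [e₁, e₂, e₃] at hne <;>
  first
  | exact absurd (by decide) hne
  | simp only [χ₁, χ₂, χ₃, Matrix.cons_val]; ring

end Trilinear

theorem stmt4_general {k V₁ V₂ V₃ : Type*} [Field k] [CharZero k]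
    [AddCommGroup V₁] [Module k V₁] [AddCommGroup V₂] [Module k V₂]
    [AddCommGroup V₃] [Module k V₃]
    (ρ₁ : Representation k (Perm (Fin 4)) V₁)
    (ρ₂ : Representation k (Perm (Fin 4)) V₂)
    (ρ₃ : Representation k (Perm (Fin 4)) V₃)
    (h₁ : IsIrreducibleRep ρ₁) (h₂ : IsIrreducibleRep ρ₂) (h₃ : IsIrreducibleRep ρ₃)
    (d₁ : finrank k V₁ = 2 ∨ finrank k V₁ = 3)
    (d₂ : finrank k V₂ = 2 ∨ finrank k V₂ = 3)
    (d₃ : finrank k V₃ = 2 ∨ finrank k V₃ = 3)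
    (hne : ({finrank k V₁, finrank k V₂, finrank k V₃} : Multiset ℕ) ≠ {2, 2, 3}) :
    ∃ Λ : V₁ →ₗ[k] V₂ →ₗ[k] V₃ →ₗ[k] k, Λ ≠ 0 ∧
      ∀ (g : Perm (Fin 4)) (v₁ : V₁) (v₂ : V₂) (v₃ : V₃),
        Λ (ρ₁ g v₁) (ρ₂ g v₂) (ρ₃ g v₃) = Λ v₁ v₂ v₃ := by
  have hone := finrank_invariants_trilinearRep_eq_one h₁ h₂ h₃ d₁ d₂ d₃ hne
  have hinv : (trilinearRep ρ₁ ρ₂ ρ₃).invariants ≠ ⊥ := fun hbot ↦ by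
    rw [hbot, finrank_bot] at hone
    exact zero_ne_one hone
  obtain ⟨Λ, hΛ, hΛ₀⟩ := Submodule.exists_mem_ne_zero_of_ne_bot hinv
  exact ⟨Λ, hΛ₀, apply_eq_of_mem_invariants_trilinearRep ρ₁ ρ₂ ρ₃ hΛ⟩

/-- Let `G = S₄` and let `W₁, W₂, W₃` be irreducible complex
representations of `G` of dimension `2` or `3`.  If the dimension triple is not
`(2, 2, 3)` up to permutation, then there is a nonzero `G`-invariant trilinear
form on `W₁ × W₂ × W₃`. -/
theorem stmt4 {V₁ V₂ V₃ : Type*}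
    [AddCommGroup V₁] [Module ℂ V₁] [AddCommGroup V₂] [Module ℂ V₂]
    [AddCommGroup V₃] [Module ℂ V₃]
    (ρ₁ : Representation ℂ (Equiv.Perm (Fin 4)) V₁)
    (ρ₂ : Representation ℂ (Equiv.Perm (Fin 4)) V₂)
    (ρ₃ : Representation ℂ (Equiv.Perm (Fin 4)) V₃)
    (h₁ : IsIrreducibleRep ρ₁) (h₂ : IsIrreducibleRep ρ₂) (h₃ : IsIrreducibleRep ρ₃)
    (d₁ : Module.finrank ℂ V₁ = 2 ∨ Module.finrank ℂ V₁ = 3)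
    (d₂ : Module.finrank ℂ V₂ = 2 ∨ Module.finrank ℂ V₂ = 3)
    (d₃ : Module.finrank ℂ V₃ = 2 ∨ Module.finrank ℂ V₃ = 3)
    (hne : ({Module.finrank ℂ V₁, Module.finrank ℂ V₂, Module.finrank ℂ V₃} : Multiset ℕ)
      ≠ ({2, 2, 3} : Multiset ℕ)) :
    ∃ Λ : V₁ →ₗ[ℂ] V₂ →ₗ[ℂ] V₃ →ₗ[ℂ] ℂ, Λ ≠ 0 ∧
      ∀ (g : Equiv.Perm (Fin 4)) (v₁ : V₁) (v₂ : V₂) (v₃ : V₃),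
        Λ (ρ₁ g v₁) (ρ₂ g v₂) (ρ₃ g v₃) = Λ v₁ v₂ v₃ :=
  stmt4_general ρ₁ ρ₂ ρ₃ h₁ h₂ h₃ d₁ d₂ d₃ hne
end
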